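/- Let m ≥ 2, let V_m = ℤ[x]/(Sym_{m−1}) and let I be the ideal of V_m generated by the residue class of x − 2. Then the I-adic completion of V_m is isomorphic as an abelian group to the product, over the prime divisors p of m, of δ(p,m) copies of the p-adic integers ℤ_p. (Paper's Proposition 1.1: the p-primary component of (V_m)^∧_I is (ℤ_p)^{δ(p,m)}.) -/

import Mathlib

open Polynomial

/-- The Chebyshev-like polynomials: `symPoly 0 = 1`, `symPoly 1 = X`,
`symPoly (k+2) = X * symPoly (k+1) - symPoly k`. -/
noncomputable def symPoly : ℕ → ℤ[X]
  | 0 => 1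
  | 1 => X
  | (k+2) => X * symPoly (k+1) - symPoly k

/-- `δ(p,m)`: with `i` the `p`-adic valuation of `m`, this is `2^i - 1` for `p = 2`
and `(p^i - 1)/2` for odd `p`. -/
def deltaPM (p m : ℕ) : ℕ :=
  if p = 2 then 2 ^ (m.factorization p) - 1 else (p ^ (m.factorization p) - 1) / 2

theorem adic_abstract {R B : Type*} [CommRing R] [CommRing B] (y : R) (φ : R →+* B)
    (haus : ∀ b : B, (∀ n : ℕ, φ y ^ n ∣ b) → b = 0)
    (prec : ∀ c : ℕ → B, ∃ L, ∀ n : ℕ, φ y ^ n ∣ L - ∑ k ∈ Finset.range n, φ y ^ k * c k)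
    (inj : ∀ (n : ℕ) (r : R), φ y ^ n ∣ φ r → y ^ n ∣ r)
    (surj : ∀ b : B, ∃ r : R, φ y ∣ b - φ r) :
    Nonempty (AdicCompletion (Ideal.span {y}) R ≃+ B) := by
  algebraize [φ]
  have key : ∀ (n : ℕ) (b : B),
      b ∈ ((Ideal.span {y}) ^ n • ⊤ : Submodule R B) ↔ φ y ^ n ∣ b := by
    intro n b
    rw [Ideal.span_singleton_pow, Submodule.ideal_span_singleton_smul,
      Submodule.mem_smul_pointwise_iff_exists]
    constructor
    · rintro ⟨c, -, rfl⟩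
      refine ⟨c, ?_⟩
      rw [Algebra.smul_def, RingHom.algebraMap_toAlgebra, map_pow]
    · rintro ⟨c, rfl⟩
      refine ⟨c, trivial, ?_⟩
      rw [Algebra.smul_def, RingHom.algebraMap_toAlgebra, map_pow]
  have key' : ∀ (n : ℕ) (b : R),
      b ∈ ((Ideal.span {y}) ^ n • ⊤ : Submodule R R) ↔ y ^ n ∣ b := by
    intro n b
    rw [Ideal.span_singleton_pow, smul_eq_mul, Ideal.mul_top, Ideal.mem_span_singleton]
  have : IsHausdorff (Ideal.span {y}) B := ⟨fun x hx => haus x fun n => by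
    have := hx n
    rwa [SModEq.zero, key] at this⟩
  have : IsPrecomplete (Ideal.span {y}) B := ⟨fun f hf => by
    have h1 : ∀ n, ∃ c, f (n+1) - f n = φ y ^ n * c := fun n => by
      have := (hf (Nat.le_succ n)).symm
      rw [SModEq.sub_mem, key] at this
      exact this
    choose c hc using h1
    obtain ⟨L, hL⟩ := prec c
    refine ⟨f 0 + L, fun n => ?_⟩
    have h2 : f n = f 0 + ∑ k ∈ Finset.range n, φ y ^ k * c k := by
      rw [← Finset.sum_congr rfl fun k _ => hc k, Finset.sum_range_sub]; ring
    refine SModEq.symm ?_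
    rw [SModEq.sub_mem, key, h2]
    have := hL n
    convert this using 1
    ring⟩
  have : IsAdicComplete (Ideal.span {y}) B := {}
  have hs : Function.Surjective (AdicCompletion.map (Ideal.span {y}) (Algebra.linearMap R B)) := by
    apply AdicCompletion.map_surjective_of_mkQ_comp_surjective
    intro b
    obtain ⟨b, rfl⟩ := Submodule.Quotient.mk_surjective _ b
    obtain ⟨r, hr⟩ := surj b
    refine ⟨r, ?_⟩
    rw [LinearMap.comp_apply, Submodule.mkQ_apply, eq_comm, Submodule.Quotient.eq]
    have := (key 1 (b - φ r)).2 (by simpa using hr)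
    rw [pow_one] at this
    exact this
  have hi : Function.Injective (AdicCompletion.map (Ideal.span {y}) (Algebra.linearMap R B)) := by
    rw [injective_iff_map_eq_zero]
    intro x hx
    induction x using AdicCompletion.induction_on with | _ f => ?_
    apply AdicCompletion.ext
    intro n
    have h3 := congrArg (fun z => z.val n) hx
    simp only [AdicCompletion.map_mk] at h3
    have h4 : (Submodule.Quotient.mk (φ (f n)) : B ⧸ ((Ideal.span {y}) ^ n • ⊤ : Submodule R B)) = 0 := h3
    rw [Submodule.Quotient.mk_eq_zero, key] at h4
    have h5 := inj n _ h4
    rw [← key', ← Submodule.Quotient.mk_eq_zero] at h5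
    exact h5
  exact ⟨(AddEquiv.ofBijective _ (show Function.Bijective
      (AdicCompletion.map (Ideal.span {y}) (Algebra.linearMap R B)) from ⟨hi, hs⟩)).trans
    (AdicCompletion.ofLinearEquiv (Ideal.span {y}) B).symm.toAddEquiv⟩

theorem quot_haus {R : Type*} [CommRing R] [IsNoetherianRing R] [IsLocalRing R]
    (g : PowerSeries R) (b : PowerSeries R ⧸ Ideal.span {g})
    (h : ∀ n : ℕ, (Ideal.Quotient.mk (Ideal.span {g}) PowerSeries.X) ^ n ∣ b) : b = 0 := by
  have h1 := Ideal.iInf_pow_smul_eq_bot_of_isLocalRing (R := PowerSeries R)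
    (M := PowerSeries R ⧸ Ideal.span {g}) (I := Ideal.span {(PowerSeries.X : PowerSeries R)}) (by
      rw [Ne, Ideal.span_singleton_eq_top]
      intro h
      have := PowerSeries.isUnit_iff_constantCoeff.1 h
      simp at this)
  rw [← Submodule.mem_bot (PowerSeries R), ← h1, Submodule.mem_iInf]
  intro n
  rw [Ideal.span_singleton_pow, Submodule.ideal_span_singleton_smul,
      Submodule.mem_smul_pointwise_iff_exists]
  obtain ⟨c, rfl⟩ := h n
  refine ⟨c, trivial, ?_⟩
  rw [← map_pow]
  obtain ⟨c, rfl⟩ := Ideal.Quotient.mk_surjective c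
  rfl

theorem quot_prec {R : Type*} [CommRing R] 
    (g : PowerSeries R) (c : ℕ → PowerSeries R ⧸ Ideal.span {g}) :
    ∃ L, ∀ n : ℕ, (Ideal.Quotient.mk (Ideal.span {g}) PowerSeries.X) ^ n ∣
      L - ∑ k ∈ Finset.range n, (Ideal.Quotient.mk (Ideal.span {g}) PowerSeries.X) ^ k * c k := by
  choose d hd using fun k => Ideal.Quotient.mk_surjective (c k)
  let L : PowerSeries R := PowerSeries.mk fun j =>
    PowerSeries.coeff j (∑ k ∈ Finset.range (j+1), PowerSeries.X ^ k * d k)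
  refine ⟨Ideal.Quotient.mk _ L, fun n => ?_⟩
  simp only [← hd, ← map_pow, ← map_mul, ← map_sum, ← map_sub]
  apply _root_.map_dvd
  rw [PowerSeries.X_pow_dvd_iff]
  intro j hj
  rw [map_sub, PowerSeries.coeff_mk, sub_eq_zero, map_sum, map_sum]
  apply Finset.sum_subset
  · intro k; simp; omega
  · intro k hk hk'
    simp at hk hk'
    rw [PowerSeries.coeff_X_pow_mul', if_neg (by omega)]

theorem weier {p : ℕ} [Fact p.Prime] (g : PowerSeries ℤ_[p]) (d : ℕ)
    (h : (g.map (IsLocalRing.residue ℤ_[p])).order = d) :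
    Nonempty ((PowerSeries ℤ_[p] ⧸ Ideal.span {g}) ≃+ (Fin d → ℤ_[p])) := by
  have h0 : g.map (IsLocalRing.residue ℤ_[p]) ≠ 0 := by
    intro h1; rw [h1, PowerSeries.order_zero] at h; exact absurd h (by simp)
  obtain ⟨f, u, H⟩ := PowerSeries.exists_isWeierstrassFactorization h0
  have hd := H.natDegree_eq_toNat_order_map
  rw [h] at hd
  simp at hd
  have hm : f.Monic := H.isDistinguishedAt.monic
  let b := (AdjoinRoot.powerBasis' hm).basis
  have hdim : (AdjoinRoot.powerBasis' hm).dim = d := by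
    rw [AdjoinRoot.powerBasis'_dim, hd]
  exact ⟨(H.algEquivQuotient.symm.toLinearEquiv.trans
    ((b.equivFun).trans (LinearEquiv.funCongrLeft _ _ (finCongr hdim.symm)))).toAddEquiv⟩

theorem symPoly_eq : ∀ n : ℕ, symPoly n = Chebyshev.S ℤ n
  | 0 => by simp [symPoly]
  | 1 => by simp [symPoly]
  | (k+2) => by
    rw [symPoly, symPoly_eq (k+1), symPoly_eq k]
    push_cast
    rw [Chebyshev.S_add_two]

theorem pell (R : Type*) [CommRing R] (n : ℤ) :
    Chebyshev.C R n ^ 2 - 4 = (X ^ 2 - 4) * Chebyshev.S R (n - 1) ^ 2 := by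
  have h1 := Chebyshev.C_eq_S_sub_X_mul_S R n
  have h2 := Chebyshev.S_sq_add_S_sq R (n - 1)
  rw [sub_add_cancel] at h2
  rw [h1]
  linear_combination 4 * h2

theorem C_pow_char (k : Type*) [CommRing k] (p : ℕ) [Fact p.Prime] [CharP k p] (i : ℕ) :
    Chebyshev.C k ((p ^ i : ℕ) : ℤ) = X ^ (p ^ i) := by
  induction i with
  | zero => simp
  | succ i ih =>
    rw [pow_succ, Nat.cast_mul, Chebyshev.C_mul, ih, ← dickson_one_one_eq_chebyshev_C,
      dickson_one_one_charP]
    simp [← pow_mul, mul_comm]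

theorem char_id (k : Type*) [Field k] (p : ℕ) [Fact p.Prime] [CharP k p] (i n : ℕ) :
    (X ^ 2 - 4) * Chebyshev.S k (((p ^ i * n : ℕ) : ℤ) - 1) ^ 2 =
      ((X ^ 2 - 4) * Chebyshev.S k ((n : ℤ) - 1) ^ 2) ^ (p ^ i) := by
  have : CharP k[X] p := inferInstance
  have : ExpChar k[X] p := ExpChar.prime Fact.out
  have h4 : (4 : k[X]) ^ (p ^ i) = 4 := by
    have h := map_natCast (iterateFrobenius k[X] p i) 4
    rw [iterateFrobenius_def] at h
    simpa using h
  rw [← pell, ← pell, sub_pow_expChar_pow, h4, Nat.cast_mul, Chebyshev.C_mul, C_pow_char]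
  simp only [X_pow_comp]
  ring

theorem order_S (k : Type*) [Field k] (p : ℕ) [Fact p.Prime] [CharP k p] (m : ℕ) (hm : m ≠ 0)
    : (Polynomial.eval₂ (Int.castRingHom (PowerSeries k)) (PowerSeries.X + 2) (symPoly (m-1))).order
      = deltaPM p m := by
  have hp : p.Prime := Fact.out
  let ψ : k[X] →+* PowerSeries k := Polynomial.eval₂RingHom (PowerSeries.C) (PowerSeries.X + 2)
  set i := m.factorization p with hi
  set n := m / p ^ i with hn
  have hmn : p ^ i * n = m := Nat.ordProj_mul_ordCompl_eq_self m p
  have hpn : ¬ p ∣ n := Nat.not_dvd_ordCompl hp hm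
  have hn0 : n ≠ 0 := fun h => hpn (h ▸ dvd_zero p)
  have e1 : Polynomial.eval₂ (Int.castRingHom (PowerSeries k)) (PowerSeries.X + 2) (symPoly (m-1))
      = ψ (Chebyshev.S k ((m : ℤ) - 1)) := by
    rw [symPoly_eq, ← Chebyshev.map_S (Int.castRingHom k)]
    simp only [ψ, coe_eval₂RingHom, eval₂_map]
    rw [Nat.cast_sub (by omega)]
    congr 1
    exact RingHom.ext_int _ _
  have h := congrArg ψ (char_id k p i n)
  rw [hmn] at h
  simp only [map_mul, map_pow, map_sub] at h
  have hX : ψ X = PowerSeries.X + 2 := by simp [ψ]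
  have h4 : ψ 4 = 4 := map_ofNat ψ 4
  rw [e1]
  have hfac : ψ X ^ 2 - ψ 4 = PowerSeries.X * (PowerSeries.X + 4) := by rw [hX, h4]; ring
  have hord0 : (ψ (Chebyshev.S k ((n : ℤ) - 1))).order = 0 := by
    by_contra hne
    have h0 := PowerSeries.order_ne_zero_iff_constCoeff_eq_zero.1 hne
    have : (PowerSeries.constantCoeff.comp ψ) = Polynomial.evalRingHom (2 : k) := by
      ext <;> simp [ψ, map_ofNat]
    have h1 : PowerSeries.constantCoeff (ψ (Chebyshev.S k ((n : ℤ) - 1))) =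
      (Chebyshev.S k ((n : ℤ) - 1)).eval 2 := by
      exact congrArg (fun f : k[X] →+* k => f (Chebyshev.S k ((n : ℤ) - 1))) this
    rw [h1, Chebyshev.S_eval_two] at h0
    push_cast at h0
    rw [sub_add_cancel, CharP.cast_eq_zero_iff k p] at h0
    exact hpn h0
  have ho := congrArg PowerSeries.order h
  rw [hfac] at ho
  simp only [PowerSeries.order_mul, PowerSeries.order_pow, hord0, PowerSeries.order_X] at ho
  have hpi : 1 ≤ p ^ i := Nat.one_le_pow _ _ hp.pos
  by_cases h2 : p = 2
  · subst h2
    have h40 : (4 : PowerSeries k) = 0 := by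
      have : (2 : k) = 0 := by exact_mod_cast CharP.cast_eq_zero k 2
      have h2 : (2 : PowerSeries k) = 0 := by
        have := congrArg (PowerSeries.C (R := k)) this
        rwa [map_ofNat, map_zero] at this
      linear_combination (2 : PowerSeries k) * h2
    rw [h40, add_zero, PowerSeries.order_X] at ho
    have hnt : (ψ (Chebyshev.S k ((m : ℤ) - 1))).order ≠ ⊤ := by
      intro ht; rw [ht] at ho
      simp at ho
      exact absurd ho (by exact_mod_cast WithTop.coe_ne_top.symm)
    obtain ⟨d, hd⟩ := ENat.ne_top_iff_exists.1 hnt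
    rw [← hd] at ho ⊢
    simp only [deltaPM, if_true]
    simp at ho
    norm_cast at ho ⊢
    rw [← hi]
    omega
  · have hX4 : (PowerSeries.X + 4 : PowerSeries k).order = 0 := by
      by_contra hne
      have h0 := PowerSeries.order_ne_zero_iff_constCoeff_eq_zero.1 hne
      rw [map_add, PowerSeries.constantCoeff_X, map_ofNat, zero_add] at h0
      have : ((4 : ℕ) : k) = 0 := by exact_mod_cast h0
      rw [CharP.cast_eq_zero_iff k p] at this
      have h22 : p ∣ 2 ^ 2 := by simpa using this
      exact h2 ((Nat.prime_dvd_prime_iff_eq hp Nat.prime_two).1 (hp.dvd_of_dvd_pow h22))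
    rw [hX4] at ho
    have hnt : (ψ (Chebyshev.S k ((m : ℤ) - 1))).order ≠ ⊤ := by
      intro ht; rw [ht] at ho
      simp at ho
      exact absurd ho (by exact_mod_cast WithTop.coe_ne_top.symm)
    obtain ⟨d, hd⟩ := ENat.ne_top_iff_exists.1 hnt
    rw [← hd] at ho ⊢
    simp only [deltaPM, if_neg h2]
    simp at ho
    norm_cast at ho ⊢
    rw [← hi]
    omega

theorem exists_e (m n : ℕ) (hm : m ≠ 0) : ∃ e : {p : ℕ // p ∈ m.primeFactors} → ℤ,
    (∀ p (k : ℤ), (p.1 : ℤ) ^ (m.factorization p.1 * n) ∣ k → (m : ℤ) ^ n ∣ e p * k) ∧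
    (∀ p, (p.1 : ℤ) ^ (m.factorization p.1 * n) ∣ e p - 1) ∧
    (∀ p q, p ≠ q → (q.1 : ℤ) ^ (m.factorization q.1 * n) ∣ e p) ∧
    (m : ℤ) ^ n ∣ 1 - ∑ p, e p := by
  have hprime : ∀ p : {p : ℕ // p ∈ m.primeFactors}, p.1.Prime :=
    fun p => Nat.prime_of_mem_primeFactors p.2
  have hsplit : ∀ p : {p : ℕ // p ∈ m.primeFactors},
      (m : ℤ) ^ n = (p.1 : ℤ) ^ (m.factorization p.1 * n) *
        ((m / p.1 ^ m.factorization p.1 : ℕ) : ℤ) ^ n := by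
    intro p
    rw [pow_mul, ← mul_pow]
    exact_mod_cast congrArg (fun z : ℕ => z ^ n) (Nat.ordProj_mul_ordCompl_eq_self m p.1).symm
  have hb : ∀ p : {p : ℕ // p ∈ m.primeFactors}, ∃ s : ℤ,
      (p.1 : ℤ) ^ (m.factorization p.1 * n) ∣
        ((m / p.1 ^ m.factorization p.1 : ℕ) : ℤ) ^ n * s - 1 := by
    intro p
    have hc : IsCoprime ((p.1 : ℤ) ^ (m.factorization p.1 * n))
        (((m / p.1 ^ m.factorization p.1 : ℕ) : ℤ) ^ n) := by
      apply IsCoprime.pow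
      rw [Nat.isCoprime_iff_coprime]
      exact Nat.coprime_ordCompl (hprime p) hm
    obtain ⟨a, b, hab⟩ := hc
    exact ⟨b, -a, by linear_combination hab⟩
  choose s hs using hb
  have h3 : ∀ p q : {p : ℕ // p ∈ m.primeFactors}, p ≠ q →
      (q.1 : ℤ) ^ (m.factorization q.1 * n) ∣
      ((m / p.1 ^ m.factorization p.1 : ℕ) : ℤ) ^ n * s p := by
    intro p q hpq
    apply Dvd.dvd.mul_right
    rw [pow_mul]
    apply pow_dvd_pow_of_dvd
    have hcop : Nat.Coprime (q.1 ^ m.factorization q.1) (p.1 ^ m.factorization p.1) := by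
      apply Nat.Coprime.pow
      exact (Nat.coprime_primes (hprime q) (hprime p)).2 fun h => hpq (Subtype.ext h.symm)
    have h1 : q.1 ^ m.factorization q.1 ∣ p.1 ^ m.factorization p.1 * (m / p.1 ^ m.factorization p.1) := by
      rw [Nat.ordProj_mul_ordCompl_eq_self]
      exact Nat.ordProj_dvd m q.1
    exact_mod_cast hcop.dvd_of_dvd_mul_left h1
  refine ⟨fun p => ((m / p.1 ^ m.factorization p.1 : ℕ) : ℤ) ^ n * s p, ?_, hs, h3, ?_⟩
  · rintro p k ⟨t, rfl⟩
    rw [hsplit p]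
    exact ⟨s p * t, by ring⟩
  · have hprod : (m : ℤ) ^ n = ∏ p : {p : ℕ // p ∈ m.primeFactors},
        (p.1 : ℤ) ^ (m.factorization p.1 * n) := by
      have h := Nat.prod_factorization_pow_eq_self hm
      rw [Finsupp.prod, Nat.support_factorization] at h
      have h' : (m : ℤ) = ∏ p ∈ m.primeFactors, (p : ℤ) ^ m.factorization p := by
        exact_mod_cast h.symm
      rw [Finset.prod_coe_sort m.primeFactors (fun p : ℕ => (p : ℤ) ^ (m.factorization p * n))]
      nth_rewrite 1 [h']
      rw [← Finset.prod_pow]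
      simp_rw [pow_mul]
    rw [hprod]
    apply Finset.prod_dvd_of_coprime
    · intro p _ q _ hpq
      apply IsCoprime.pow
      rw [Nat.isCoprime_iff_coprime]
      exact (Nat.coprime_primes (hprime p) (hprime q)).2 fun h => hpq (Subtype.ext h)
    · intro p _
      rw [← Finset.add_sum_erase _ _ (Finset.mem_univ p), ← sub_sub]
      apply dvd_sub
      · rw [← dvd_neg, neg_sub]; exact hs p
      · apply Finset.dvd_sum
        intro q hq
        exact h3 q p (Finset.ne_of_mem_erase hq)

/-- m^n ∈ (X^n, F) -/
theorem const_pow_mem (R : Type*) [CommRing R] (F x h : R) (m : R) (hF : F = m + x * h) (n : ℕ) :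
    ∃ c d : R, m ^ n = x ^ n * c + F * d := by
  have h1 : F ∣ m ^ n - (- (x * h)) ^ n := by
    refine dvd_trans ?_ (sub_dvd_pow_sub_pow _ _ n)
    rw [hF, sub_neg_eq_add]
  obtain ⟨d, hd⟩ := h1
  refine ⟨(-h) ^ n, d, ?_⟩
  rw [← hd, ← mul_pow]; ring

theorem poly_of_coeff_dvd (N : ℤ) (n : ℕ) (u : ℤ[X]) (h : ∀ k < n, N ∣ u.coeff k) :
    ∃ w a : ℤ[X], u = C N * w + X ^ n * a := by
  choose! t ht using h
  let w : ℤ[X] := ∑ k ∈ Finset.range n, monomial k (t k)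
  have : X ^ n ∣ u - C N * w := by
    rw [X_pow_dvd_iff]
    intro d hd
    rw [coeff_sub, coeff_C_mul, finsetSum_coeff]
    simp only [coeff_monomial]
    rw [Finset.sum_ite_eq' , if_pos (Finset.mem_range.2 hd), ← ht d hd, sub_self]
  obtain ⟨a, ha⟩ := this
  exact ⟨w, a, by rw [← ha]; ring⟩

theorem approx {p : ℕ} [Fact p.Prime] (N n : ℕ) (F u : ℤ[X]) (a b : PowerSeries ℤ_[p])
    (h : ((u.map (Int.castRingHom ℤ_[p]) : ℤ_[p][X]) : PowerSeries ℤ_[p]) =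
      PowerSeries.X ^ n * a + ((F.map (Int.castRingHom ℤ_[p]) : ℤ_[p][X]) : PowerSeries ℤ_[p]) * b) :
    ∃ b' : ℤ[X], ∀ k < n, (p : ℤ) ^ N ∣ (u - F * b').coeff k := by
  let b' : ℤ[X] := ∑ j ∈ Finset.range n, monomial j (((PowerSeries.coeff j b).appr N : ℕ) : ℤ)
  have hb' : ∀ j < n, b'.coeff j = ((PowerSeries.coeff j b).appr N : ℕ) := by
    intro j hj
    rw [finsetSum_coeff]
    simp only [coeff_monomial]
    rw [Finset.sum_ite_eq' , if_pos (Finset.mem_range.2 hj)]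
  refine ⟨b', fun k hk => ?_⟩
  rw [← PadicInt.pow_p_dvd_int_iff]
  have h1 : (((u - F * b').coeff k : ℤ) : ℤ_[p]) =
     PowerSeries.coeff k (PowerSeries.X ^ n * a + ((F.map (Int.castRingHom ℤ_[p]) : ℤ_[p][X]) : PowerSeries ℤ_[p]) *
      (b - ((b'.map (Int.castRingHom ℤ_[p]) : ℤ_[p][X]) : PowerSeries ℤ_[p]))) := by
    rw [mul_sub, ← add_sub_assoc, ← h, ← Polynomial.coe_mul, ← Polynomial.map_mul, map_sub,
      Polynomial.coeff_coe, Polynomial.coeff_coe, coeff_map, coeff_map, coeff_sub]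
    simp
  rw [h1, map_add, PowerSeries.coeff_X_pow_mul', if_neg (by omega), zero_add, PowerSeries.coeff_mul]
  apply Finset.dvd_sum
  rintro ⟨i, j⟩ hij
  rw [Finset.HasAntidiagonal.mem_antidiagonal] at hij
  apply Dvd.dvd.mul_left
  rw [map_sub, Polynomial.coeff_coe, coeff_map, hb' j (by simp at hij; omega)]
  have := PadicInt.appr_spec N (PowerSeries.coeff j b)
  rw [Ideal.mem_span_singleton] at this
  simpa using this

theorem inj_aux (m n : ℕ) (hm : m ≠ 0) (F u h : ℤ[X]) (hF : F = (m : ℤ[X]) + X * h)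
    (H : ∀ p : {p : ℕ // p ∈ m.primeFactors}, ∃ b' : ℤ[X],
      ∀ k < n, (p.1 : ℤ) ^ (m.factorization p.1 * n) ∣ (u - F * b').coeff k) :
    ∃ a b : ℤ[X], u = X ^ n * a + F * b := by
  choose b' hb' using H
  obtain ⟨e, he, -, -, hsum⟩ := exists_e m n hm
  have h1 : u - F * ∑ p, C (e p) * b' p =
      C (1 - ∑ p, e p) * u + ∑ p, C (e p) * (u - F * b' p) := by
    simp only [mul_sub, Finset.sum_sub_distrib, map_sub, map_sum, ← Finset.sum_mul, Finset.mul_sum,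
      map_one, sub_mul, one_mul]
    rw [sub_add_sub_cancel]
    congr 1
    exact Finset.sum_congr rfl fun p _ => by ring
  obtain ⟨w, a, hwa⟩ := poly_of_coeff_dvd ((m : ℤ) ^ n) n (u - F * ∑ p, C (e p) * b' p) (by
    intro k hk
    rw [h1, coeff_add, coeff_C_mul, finsetSum_coeff]
    apply dvd_add (hsum.mul_right _)
    apply Finset.dvd_sum
    intro p _
    rw [coeff_C_mul]
    exact he p _ (hb' p k hk))
  obtain ⟨c, d, hcd⟩ := const_pow_mem ℤ[X] F X h m hF n
  have hC : (C ((m : ℤ) ^ n) : ℤ[X]) = (m : ℤ[X]) ^ n := by simp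
  rw [hC, hcd] at hwa
  exact ⟨c * w + a, d * w + ∑ p, C (e p) * b' p, by linear_combination hwa⟩

theorem surj_aux (m : ℕ) (hm : m ≠ 0)
    (a : (p : {p : ℕ // p ∈ m.primeFactors}) →
      @PadicInt p.1 (Fact.mk (Nat.prime_of_mem_primeFactors p.2))) :
    ∃ k : ℤ, ∀ p : {p : ℕ // p ∈ m.primeFactors},
      letI : Fact p.1.Prime := Fact.mk (Nat.prime_of_mem_primeFactors p.2)
      (m : ℤ_[p.1]) ∣ a p - (k : ℤ_[p.1]) := by
  obtain ⟨e, -, he1, he2, -⟩ := exists_e m 1 hm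
  simp only [mul_one] at he1 he2
  let r : {p : ℕ // p ∈ m.primeFactors} → ℤ := fun p => 
    letI : Fact p.1.Prime := Fact.mk (Nat.prime_of_mem_primeFactors p.2)
    ((a p).appr (m.factorization p.1) : ℕ)
  refine ⟨∑ p, e p * r p, fun p => ?_⟩
  let _ : Fact p.1.Prime := Fact.mk (Nat.prime_of_mem_primeFactors p.2)
  have hdvd : (m : ℤ_[p.1]) ∣ (p.1 : ℤ_[p.1]) ^ m.factorization p.1 := by
    have h1 : (m : ℤ_[p.1]) = (p.1 : ℤ_[p.1]) ^ m.factorization p.1 *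
        ((m / p.1 ^ m.factorization p.1 : ℕ) : ℤ_[p.1]) := by
      exact_mod_cast congrArg (Nat.cast (R := ℤ_[p.1])) (Nat.ordProj_mul_ordCompl_eq_self m p.1).symm
    have hu : IsUnit ((m / p.1 ^ m.factorization p.1 : ℕ) : ℤ_[p.1]) := by
      rw [PadicInt.isUnit_iff]
      rw [PadicInt.norm_natCast_eq_one_iff]
      exact Nat.coprime_ordCompl Fact.out hm
    rw [h1]
    exact hu.mul_right_dvd.2 dvd_rfl
  refine hdvd.trans ?_
  have hint : (p.1 : ℤ) ^ m.factorization p.1 ∣ r p - ∑ q, e q * r q := by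
    rw [← Finset.add_sum_erase _ _ (Finset.mem_univ p), ← sub_sub]
    apply dvd_sub
    · have : r p - e p * r p = - ((e p - 1) * r p) := by ring
      rw [this, dvd_neg]
      exact (he1 p).mul_right _
    · apply Finset.dvd_sum
      intro q hq
      exact (he2 q p (Finset.ne_of_mem_erase hq)).mul_right _
  rw [← PadicInt.pow_p_dvd_int_iff] at hint
  have := PadicInt.appr_spec (m.factorization p.1) (a p)
  rw [Ideal.mem_span_singleton] at this
  have h3 := dvd_add this hint
  convert h3 using 1
  simp [r]

section LocalFactors

theorem primeFactorFact (m : ℕ) (p : {p : ℕ // p ∈ m.primeFactors}) : Fact p.1.Prime :=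
  Fact.mk (Nat.prime_of_mem_primeFactors p.2)

attribute [local instance] primeFactorFact

/-- Substitute `X + 2` for `X`, landing in power series. -/
noncomputable def psiHom (R : Type*) [CommRing R] : ℤ[X] →+* PowerSeries R :=
  Polynomial.eval₂RingHom (Int.castRingHom (PowerSeries R)) (PowerSeries.X + 2)

theorem psiHom_eq (R : Type*) [CommRing R] (v : ℤ[X]) :
    psiHom R v = (((v.comp (X + 2)).map (Int.castRingHom R) : R[X]) : PowerSeries R) := by
  have : psiHom R = (Polynomial.coeToPowerSeries.ringHom (R := R)).comp
      ((Polynomial.mapRingHom (Int.castRingHom R)).comp (Polynomial.compRingHom (X + 2))) := by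
    apply Polynomial.ringHom_ext'
    · exact RingHom.ext_int _ _
    · simp only [psiHom, coe_eval₂RingHom, RingHom.comp_apply, compRingHom, eval₂_X,
        coe_mapRingHom]
      simp
      exact (map_ofNat (Polynomial.coeToPowerSeries.ringHom (R := R)) 2).symm
  rw [this]
  simp

/-- The local factor. -/
abbrev LocFac (m : ℕ) (p : {p : ℕ // p ∈ m.primeFactors}) : Type :=
  PowerSeries ℤ_[p.1] ⧸ Ideal.span {psiHom ℤ_[p.1] (symPoly (m-1))}

theorem locFac_equiv (m : ℕ) (hm : m ≠ 0) (p : {p : ℕ // p ∈ m.primeFactors}) :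
    Nonempty (LocFac m p ≃+ (Fin (deltaPM p.1 m) → ℤ_[p.1])) := by
  apply weier
  have : CharP (IsLocalRing.ResidueField ℤ_[p.1]) p.1 :=
    charP_of_injective_ringHom (f := (PadicInt.residueField (p := p.1)).symm.toRingHom)
      (PadicInt.residueField (p := p.1)).symm.injective p.1
  rw [← order_S (IsLocalRing.ResidueField ℤ_[p.1]) p.1 m hm]
  congr 1
  have h2 : (PowerSeries.map (IsLocalRing.residue ℤ_[p.1])).comp (psiHom ℤ_[p.1]) =
      psiHom (IsLocalRing.ResidueField ℤ_[p.1]) := by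
    apply Polynomial.ringHom_ext'
    · exact RingHom.ext_int _ _
    · simp [psiHom, map_ofNat]
  exact congrArg (fun f => f (symPoly (m-1))) h2

theorem symPoly_comp (m : ℕ) (hm : m ≠ 0) :
    ∃ h : ℤ[X], (symPoly (m-1)).comp (X + 2) = (m : ℤ[X]) + X * h := by
  have : X ∣ (symPoly (m-1)).comp (X + 2) - (m : ℤ[X]) := by
    rw [X_dvd_iff, coeff_zero_eq_eval_zero, eval_sub, eval_comp, symPoly_eq]
    simp [Chebyshev.S_eval_two, Nat.cast_sub (Nat.one_le_iff_ne_zero.2 hm)]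
  obtain ⟨h, hh⟩ := this
  exact ⟨h, by rw [← hh]; ring⟩

/-- The comparison map. -/
noncomputable def phiHom (m : ℕ) : (ℤ[X] ⧸ Ideal.span {symPoly (m-1)}) →+*
    ((p : {p : ℕ // p ∈ m.primeFactors}) → LocFac m p) :=
  RingHom.pi fun p => Ideal.Quotient.lift _
    ((Ideal.Quotient.mk (Ideal.span {psiHom ℤ_[p.1] (symPoly (m-1))})).comp (psiHom ℤ_[p.1])) (by
      intro a ha
      rw [Ideal.mem_span_singleton] at ha
      rw [RingHom.comp_apply, Ideal.Quotient.eq_zero_iff_mem, Ideal.mem_span_singleton]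
      exact _root_.map_dvd _ ha)

theorem phiHom_mk (m : ℕ) (v : ℤ[X]) (p : {p : ℕ // p ∈ m.primeFactors}) :
    phiHom m (Ideal.Quotient.mk _ v) p = Ideal.Quotient.mk _ (psiHom ℤ_[p.1] v) := rfl

theorem phiHom_y (m : ℕ) (p : {p : ℕ // p ∈ m.primeFactors}) :
    phiHom m (Ideal.Quotient.mk _ (X - 2)) p = Ideal.Quotient.mk _ PowerSeries.X := by
  rw [phiHom_mk]
  congr 1
  simp [psiHom]

theorem stmt_aux (m : ℕ) (hm : 2 ≤ m) :
    Nonempty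
      ((AdicCompletion
          (Ideal.span {Ideal.Quotient.mk (Ideal.span {symPoly (m-1)}) (X - 2)})
          (ℤ[X] ⧸ Ideal.span {symPoly (m-1)})) ≃+
        ((p : {p : ℕ // p ∈ m.primeFactors}) →
          Fin (deltaPM p.1 m) →
            @PadicInt p.1 (Fact.mk (Nat.prime_of_mem_primeFactors p.2)))) := by
  have hm0 : m ≠ 0 := by omega
  obtain ⟨h, hh⟩ := symPoly_comp m hm0
  have main : Nonempty ((AdicCompletion
          (Ideal.span {Ideal.Quotient.mk (Ideal.span {symPoly (m-1)}) (X - 2)})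
          (ℤ[X] ⧸ Ideal.span {symPoly (m-1)})) ≃+
        ((p : {p : ℕ // p ∈ m.primeFactors}) → LocFac m p)) := by
    apply adic_abstract _ (phiHom m)
    · intro b hb
      funext p
      apply quot_haus
      intro n
      have := pi_dvd_iff.1 (hb n) p
      rwa [Pi.pow_apply, phiHom_y] at this
    · intro c
      have hex : ∀ p : {p : ℕ // p ∈ m.primeFactors}, ∃ L : LocFac m p, ∀ n : ℕ,
          (Ideal.Quotient.mk (Ideal.span {psiHom ℤ_[p.1] (symPoly (m-1))}) PowerSeries.X) ^ n ∣
            L - ∑ k ∈ Finset.range n, (Ideal.Quotient.mk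
              (Ideal.span {psiHom ℤ_[p.1] (symPoly (m-1))}) PowerSeries.X) ^ k * c k p :=
        fun p => quot_prec (psiHom ℤ_[p.1] (symPoly (m-1))) (fun k => c k p)
      choose L hL using hex
      refine ⟨L, fun n => pi_dvd_iff.2 fun p => ?_⟩
      have := hL p n
      simpa only [Pi.pow_apply, Pi.sub_apply, Finset.sum_apply, Pi.mul_apply, phiHom_y] using this
    · intro n r hr
      obtain ⟨v, rfl⟩ := Ideal.Quotient.mk_surjective r
      obtain ⟨a, b, hab⟩ := inj_aux m n hm0 ((symPoly (m-1)).comp (X + 2)) (v.comp (X + 2)) h hh (by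
        intro p
        have h1 := pi_dvd_iff.1 hr p
        rw [Pi.pow_apply, phiHom_y, phiHom_mk] at h1
        obtain ⟨a, ha⟩ := h1
        obtain ⟨a, rfl⟩ := Ideal.Quotient.mk_surjective a
        rw [← map_pow, ← map_mul, Ideal.Quotient.eq, Ideal.mem_span_singleton] at ha
        obtain ⟨b, hb⟩ := ha
        apply approx _ n _ _ a b
        rw [← psiHom_eq, ← psiHom_eq, ← hb]
        ring)
      have h2 := congrArg (fun q : ℤ[X] => q.comp (X - 2)) hab
      have hcc : (X + 2 : ℤ[X]).comp (X - 2) = X := by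
        rw [add_comp, X_comp]
        have : (2 : ℤ[X]).comp (X - 2) = 2 := ofNat_comp 2
        rw [this, sub_add_cancel]
      beta_reduce at h2
      rw [add_comp, mul_comp, mul_comp, comp_assoc, comp_assoc, hcc, comp_X, comp_X,
        X_pow_comp] at h2
      rw [h2, map_add, map_mul, map_mul, map_pow, Ideal.Quotient.eq_zero_iff_mem.2
        (Ideal.mem_span_singleton_self (symPoly (m-1))), zero_mul, add_zero]
      exact dvd_mul_right _ _
    · intro b
      choose s hs using fun p => Ideal.Quotient.mk_surjective (b p)
      obtain ⟨k, hk⟩ := surj_aux m hm0 (fun p => PowerSeries.constantCoeff (s p))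
      refine ⟨Ideal.Quotient.mk _ (C k), pi_dvd_iff.2 fun p => ?_⟩
      rw [phiHom_y, Pi.sub_apply, phiHom_mk, ← hs p]
      have hX : (PowerSeries.X : PowerSeries ℤ_[p.1]) ∣
          s p - PowerSeries.C (PowerSeries.constantCoeff (s p)) := by
        rw [PowerSeries.X_dvd_iff]; simp
      have hC : psiHom ℤ_[p.1] (C k) = PowerSeries.C (k : ℤ_[p.1]) := by
        simp [psiHom]
      have hmX : Ideal.Quotient.mk (Ideal.span {psiHom ℤ_[p.1] (symPoly (m-1))})
          PowerSeries.X ∣ Ideal.Quotient.mk _ (PowerSeries.C (m : ℤ_[p.1])) := by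
        have h3 : PowerSeries.C (m : ℤ_[p.1]) = psiHom ℤ_[p.1] (symPoly (m-1)) -
            PowerSeries.X * ((h.map (Int.castRingHom ℤ_[p.1]) : ℤ_[p.1][X]) : PowerSeries ℤ_[p.1]) := by
          rw [psiHom_eq, hh, Polynomial.map_add, Polynomial.map_mul, Polynomial.map_X,
            Polynomial.coe_add, Polynomial.coe_mul, Polynomial.coe_X, add_sub_cancel_right,
            Polynomial.map_natCast, map_natCast]
          exact (map_natCast (Polynomial.coeToPowerSeries.ringHom (R := ℤ_[p.1])) m).symm
        refine ⟨Ideal.Quotient.mk _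
          (-((h.map (Int.castRingHom ℤ_[p.1]) : ℤ_[p.1][X]) : PowerSeries ℤ_[p.1])), ?_⟩
        rw [← map_mul, Ideal.Quotient.eq, Ideal.mem_span_singleton, h3]
        exact ⟨1, by ring⟩
      have hk' := (hmX.trans (_root_.map_dvd _ (_root_.map_dvd PowerSeries.C (hk p))))
      have hX' := _root_.map_dvd (Ideal.Quotient.mk
        (Ideal.span {psiHom ℤ_[p.1] (symPoly (m-1))})) hX
      have := dvd_add hX' hk'
      rw [← map_sub, hC]
      rw [← map_add] at this
      convert this using 2
      rw [map_sub]
      ring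
  obtain ⟨E⟩ := main
  have e := fun p => (locFac_equiv m hm0 p).some
  exact ⟨E.trans (AddEquiv.piCongrRight e)⟩

end LocalFactors

/-- Proposition 1.1: the `I`-adic completion of `V_m = ℤ[x]/(Sym_{m-1})` at the ideal
generated by `x - 2` is, as an abelian group, the product over primes `p ∣ m` of
`δ(p,m)` copies of the `p`-adic integers. -/
theorem stmt0 (m : ℕ) (hm : 2 ≤ m) :
    Nonempty
      ((AdicCompletion
          (Ideal.span {Ideal.Quotient.mk (Ideal.span {symPoly (m-1)}) (X - 2)})
          (ℤ[X] ⧸ Ideal.span {symPoly (m-1)})) ≃+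
        ((p : {p : ℕ // p ∈ m.primeFactors}) →
          Fin (deltaPM p.1 m) →
            @PadicInt p.1 (Fact.mk (Nat.prime_of_mem_primeFactors p.2)))) := by
  exact stmt_aux m hm
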